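/- If τ is a full-rank density matrix on a finite-dimensional Hilbert space and P_k is, for each k, a pinching channel on the k-fold tensor product fixing τ^{⊗k} and using at most poly(k) projectors (e.g., at most (k+1)^{c} projectors for a constant c), then limsup_{k→∞} (1/k) D(P_k(ρ^{⊗k}) ‖ τ^{⊗k}) = D(ρ‖τ) for every density matrix ρ with supp(ρ) ⊆ supp(τ). -/

import Mathlib

open Matrix
open scoped ComplexOrder

/-- Matrix logarithm of a Hermitian matrix via its spectral decomposition, with the
convention `log 0 = 0` (i.e. the logarithm is taken on the support). -/
noncomputable def matLog {ι : Type*} [Fintype ι] [DecidableEq ι]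
    (A : Matrix ι ι ℂ) : Matrix ι ι ℂ :=
  if hA : A.IsHermitian then
    (hA.eigenvectorUnitary : Matrix ι ι ℂ) *
      Matrix.diagonal (fun i => (Real.log (hA.eigenvalues i) : ℂ)) *
      (hA.eigenvectorUnitary : Matrix ι ι ℂ)ᴴ
  else 0

/-- Umegaki relative entropy `D(ρ‖σ) = Tr[ρ log ρ − ρ log σ]`. -/
noncomputable def relEnt {ι : Type*} [Fintype ι] [DecidableEq ι]
    (ρ σ : Matrix ι ι ℂ) : ℝ :=
  ((ρ * matLog ρ).trace - (ρ * matLog σ).trace).re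

/-- The `k`-fold tensor power of a matrix on `ℂ^d`, as a matrix on `(ℂ^d)^{⊗k}`
indexed by functions `Fin k → Fin d`. -/
noncomputable def powMat {d : ℕ} (ρ : Matrix (Fin d) (Fin d) ℂ) (k : ℕ) :
    Matrix (Fin k → Fin d) (Fin k → Fin d) ℂ := fun x y => ∏ i, ρ (x i) (y i)

/-!
Let `ω = P_k(ρ^{⊗k})`. The projectors commute with both `ω` and `τ^{⊗k}`, hence with their
logarithms, so pinching inside the trace costs nothing and relative entropy splits exactly:
`D(ρ^{⊗k}‖τ^{⊗k}) = D(ρ^{⊗k}‖ω) + D(ω‖τ^{⊗k})`. The left-hand side is `k D(ρ‖τ)`. The pinching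
inequality `A ≤ n • P(A)` for `n` projectors, together with `D(A‖B) ≤ log n * Tr A` whenever
`A ≤ n • B`, bounds the defect `D(ρ^{⊗k}‖ω)` by `log n`, which is `o(k)` for subexponential `n`.

The entropic inequalities and the additivity are read off from the classical sum
`D(A‖B) = ∑ i j, p i * |⟨uᵢ, vⱼ⟩|² * (log (p i) - log (q j))` over eigenbases `u` of `A` and `v`
of `B`, whose kernel `|⟨uᵢ, vⱼ⟩|²` is doubly stochastic.
-/

open Filter Topology
open scoped MatrixOrder

section Classical

variable {ι : Type*} [Fintype ι]

theorem sub_le_mul_log_sub_log {x y : ℝ} (hx : 0 ≤ x) (hy : 0 < y) :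
    x - y ≤ x * (Real.log x - Real.log y) := by
  rcases hx.eq_or_lt with rfl | hx
  · simpa using hy.le
  · have h := Real.log_le_sub_one_of_pos (div_pos hy hx)
    rw [Real.log_div hy.ne' hx.ne'] at h
    calc x - y = x * (1 - y / x) := by field_simp
      _ ≤ x * (Real.log x - Real.log y) := mul_le_mul_of_nonneg_left (by linarith) hx.le

theorem sum_sub_sum_le_of_mem_doublyStochastic [DecidableEq ι] {B : Matrix ι ι ℝ}
    (hB : B ∈ doublyStochastic ℝ ι) {p q : ι → ℝ} (hp : 0 ≤ p) (hq : 0 ≤ q)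
    (hsupp : ∀ i j, q j = 0 → p i * B i j = 0) :
    ∑ i, p i - ∑ j, q j ≤ ∑ i, p i * ∑ j, B i j * (Real.log (p i) - Real.log (q j)) := by
  have hrow : ∑ i, p i = ∑ i, ∑ j, B i j * p i := by
    simp [← Finset.sum_mul, sum_row_of_mem_doublyStochastic hB]
  have hcol : ∑ j, q j = ∑ i, ∑ j, B i j * q j := by
    rw [Finset.sum_comm]
    simp [← Finset.sum_mul, sum_col_of_mem_doublyStochastic hB]
  rw [hrow, hcol, ← Finset.sum_sub_distrib]
  simp only [← Finset.sum_sub_distrib, Finset.mul_sum]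
  gcongr with i _ j
  rcases (hq j).eq_or_lt with hqj | hqj
  · have h0 := hsupp i j hqj.symm
    rw [← mul_assoc, h0, mul_comm (B i j), h0, ← hqj]
    simp
  · calc B i j * p i - B i j * q j = B i j * (p i - q j) := by ring
      _ ≤ B i j * (p i * (Real.log (p i) - Real.log (q j))) :=
        mul_le_mul_of_nonneg_left (sub_le_mul_log_sub_log (hp i) hqj)
          (nonneg_of_mem_doublyStochastic hB)
      _ = p i * (B i j * (Real.log (p i) - Real.log (q j))) := by ring

theorem sum_mul_log_sub_log_le {w q : ι → ℝ} (hw : 0 ≤ w) (hw1 : ∑ j, w j = 1) (hq : 0 ≤ q)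
    (hsupp : ∀ j, q j = 0 → w j = 0) {x J : ℝ} (hx : 0 < x) (hJ : 0 < J)
    (h : x * ∑ j, w j / q j ≤ J) :
    ∑ j, w j * (Real.log x - Real.log (q j)) ≤ Real.log J := by
  have hterm : ∀ j, w j * (Real.log x - Real.log (q j))
      ≤ w j * (Real.log J - 1) + x / J * (w j / q j) := fun j => by
    rcases (hq j).eq_or_lt with hqj | hqj
    · simp [hsupp j hqj.symm]
    · have hlog := Real.log_le_sub_one_of_pos (div_pos hx (mul_pos hJ hqj))
      rw [Real.log_div hx.ne' (mul_pos hJ hqj).ne', Real.log_mul hJ.ne' hqj.ne'] at hlog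
      calc w j * (Real.log x - Real.log (q j))
          ≤ w j * (Real.log J - 1 + x / (J * q j)) :=
            mul_le_mul_of_nonneg_left (by linarith) (hw j)
        _ = w j * (Real.log J - 1) + x / J * (w j / q j) := by field_simp
  calc ∑ j, w j * (Real.log x - Real.log (q j))
      ≤ ∑ j, (w j * (Real.log J - 1) + x / J * (w j / q j)) :=
        Finset.sum_le_sum fun j _ => hterm j
    _ = Real.log J - 1 + (x * ∑ j, w j / q j) / J := by
        rw [Finset.sum_add_distrib, ← Finset.sum_mul, hw1, ← Finset.mul_sum]
        ring
    _ ≤ Real.log J := by linarith [(div_le_one hJ).mpr h]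

theorem prod_mul_log_prod_sub_log_prod {w p q : ι → ℝ} (hp : ∀ i, p i = 0 → w i = 0)
    (hq : ∀ i, q i = 0 → w i = 0) :
    (∏ i, w i) * (Real.log (∏ i, p i) - Real.log (∏ i, q i))
      = (∏ i, w i) * ∑ i, (Real.log (p i) - Real.log (q i)) := by
  rcases eq_or_ne (∏ i, w i) 0 with h0 | h0
  · rw [h0, zero_mul, zero_mul]
  · have hw (i : ι) : w i ≠ 0 := Finset.prod_ne_zero_iff.mp h0 i (Finset.mem_univ i)
    rw [Real.log_prod fun i _ => mt (hp i) (hw i), Real.log_prod fun i _ => mt (hq i) (hw i),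
      Finset.sum_sub_distrib]

theorem sum_prod_mul_sum_of_sum_eq_one {κ α R : Type*} [Fintype κ] [DecidableEq κ]
    [Fintype α] [CommSemiring R]
    {m : α → R} (hm : ∑ a, m a = 1) (g : α → R) :
    ∑ z : κ → α, (∏ i, m (z i)) * ∑ i, g (z i) = Fintype.card κ * ∑ a, m a * g a := by
  have hmarginal (i : κ) : ∑ z : κ → α, (∏ l, m (z l)) * g (z i) = ∑ a, m a * g a := by
    calc ∑ z : κ → α, (∏ l, m (z l)) * g (z i)
        = ∑ z : κ → α, ∏ l, m (z l) * if l = i then g (z l) else 1 := by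
          simp only [Finset.prod_mul_distrib, Finset.prod_ite_eq', Finset.mem_univ, if_true]
      _ = ∏ l, ∑ a, m a * if l = i then g a else 1 :=
          (Fintype.prod_sum fun l a => m a * if l = i then g a else 1).symm
      _ = ∑ a, m a * g a := by
          rw [Fintype.prod_eq_single i fun l hl => by simp [hl, hm]]
          simp
  simp only [Finset.mul_sum]
  rw [Finset.sum_comm]
  simp [hmarginal, Finset.mul_sum]

end Classical

theorem cfc_starAlgHom_pi {ι A : Type*} [Finite ι] [Ring A] [StarRing A] [TopologicalSpace A]
    [Algebra ℝ A] [ContinuousFunctionalCalculus ℝ A IsSelfAdjoint]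
    (φ : (ι → ℝ) →⋆ₐ[ℝ] A) (f : ℝ → ℝ) (p : ι → ℝ) : cfc f (φ p) = φ (f ∘ p) := by
  classical
  cases nonempty_fintype ι
  obtain ⟨g, hg⟩ : ∃ g : Polynomial ℝ, ∀ i, g.eval (p i) = f (p i) :=
    ⟨Lagrange.interpolate (Finset.univ.image p) id f, fun i =>
      Lagrange.eval_interpolate_at_node f Function.injective_id.injOn
        (Finset.mem_image_of_mem p (Finset.mem_univ i))⟩
  have hspec : Set.EqOn f (fun x => g.eval x) (spectrum ℝ (φ p)) := fun x hx => by
    have hx' := AlgHom.spectrum_apply_subset φ p hx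
    rw [Pi.spectrum_eq, Set.mem_iUnion] at hx'
    obtain ⟨i, hi⟩ := hx'
    obtain rfl : x = p i := by
      rwa [← Algebra.algebraMap_self_apply (p i), spectrum.scalar_eq] at hi
    exact (hg i).symm
  rw [cfc_congr hspec, cfc_polynomial g (φ p) ((IsSelfAdjoint.all p).map φ),
    Polynomial.aeval_algHom_apply φ]
  congr 1
  ext i
  simp [← hg]

theorem mulVec_eq_zero_of_le_smul {ι : Type*} [Fintype ι] {ρ σ : Matrix ι ι ℂ}
    (hρ : ρ.PosSemidef) {J : ℝ} (hle : ρ ≤ J • σ)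
    {v : ι → ℂ} (hv : σ *ᵥ v = 0) : ρ *ᵥ v = 0 := by
  have h := (le_iff.mp hle).dotProduct_mulVec_nonneg v
  rw [sub_mulVec, smul_mulVec, hv, smul_zero, zero_sub, dotProduct_neg, neg_nonneg] at h
  exact (hρ.dotProduct_mulVec_zero_iff v).mp (h.antisymm (hρ.dotProduct_mulVec_nonneg v))

section Spectral

variable {ι : Type*} [Fintype ι] [DecidableEq ι]

theorem matLog_eq_cfc (A : Matrix ι ι ℂ) : matLog A = cfc Real.log A := by
  by_cases hA : A.IsHermitian
  · rw [matLog, dif_pos hA, hA.cfc_eq]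
    rfl
  · rw [matLog, dif_neg hA, cfc_apply_of_not_predicate]
    exact hA

/-- The unital `*`-homomorphism `p ↦ U * diagonal p * U⋆`, so that a Hermitian matrix with
spectral decomposition `U * diagonal p * U⋆` is `spectralHom U p`. -/
noncomputable def spectralHom (U : unitaryGroup ι ℂ) : (ι → ℝ) →⋆ₐ[ℝ] Matrix ι ι ℂ where
  toAlgHom := (Unitary.conjStarAlgAut ℝ (Matrix ι ι ℂ) U).toAlgEquiv.toAlgHom.comp
    ((diagonalAlgHom ℝ).comp (Complex.ofRealAm.compLeft ι))
  map_star' p := by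
    change Unitary.conjStarAlgAut ℝ _ U (diagonal fun i => ((star p i : ℝ) : ℂ))
      = star (Unitary.conjStarAlgAut ℝ _ U (diagonal fun i => (p i : ℂ)))
    rw [← map_star, star_eq_conjTranspose, diagonal_conjTranspose]
    congr 2
    ext i
    simp

theorem spectralHom_apply (U : unitaryGroup ι ℂ) (p : ι → ℝ) :
    spectralHom U p = U * diagonal (fun i => (p i : ℂ)) * star (U : Matrix ι ι ℂ) := rfl

theorem exists_spectralHom_eq {A : Matrix ι ι ℂ} (hA : A.IsHermitian) :
    ∃ U p, spectralHom U p = A :=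
  ⟨hA.eigenvectorUnitary, hA.eigenvalues, hA.spectral_theorem.symm⟩

theorem exists_nonneg_spectralHom_eq {A : Matrix ι ι ℂ} (hA : A.PosSemidef) :
    ∃ U p, 0 ≤ p ∧ spectralHom U p = A :=
  ⟨hA.isHermitian.eigenvectorUnitary, hA.isHermitian.eigenvalues, hA.eigenvalues_nonneg,
    hA.isHermitian.spectral_theorem.symm⟩

theorem matLog_spectralHom (U : unitaryGroup ι ℂ) (p : ι → ℝ) :
    matLog (spectralHom U p) = spectralHom U (Real.log ∘ p) := by
  rw [matLog_eq_cfc, cfc_starAlgHom_pi]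

theorem trace_spectralHom (U : unitaryGroup ι ℂ) (p : ι → ℝ) :
    (spectralHom U p).trace = ((∑ i, p i : ℝ) : ℂ) := by
  rw [spectralHom_apply, trace_mul_cycle, Unitary.coe_star_mul_self, Matrix.one_mul,
    trace_diagonal, Complex.ofReal_sum]

/-- The unistochastic matrix `(‖W i j‖²)` of a unitary `W`. -/
noncomputable def unistochastic (W : unitaryGroup ι ℂ) : Matrix ι ι ℝ := of fun i j => ‖W i j‖ ^ 2

theorem unistochastic_mem_doublyStochastic (W : unitaryGroup ι ℂ) :
    unistochastic W ∈ doublyStochastic ℝ ι := by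
  refine mem_doublyStochastic_iff_sum.mpr ⟨fun i j => sq_nonneg _, fun i => ?_, fun j => ?_⟩
  · have h := congrFun₂ (Unitary.coe_mul_star_self W) i i
    rw [Unitary.coe_star] at h
    simp only [Matrix.mul_apply, star_apply, RCLike.star_def, Complex.mul_conj', one_apply_eq] at h
    exact_mod_cast h
  · have h := congrFun₂ (Unitary.coe_star_mul_self W) j j
    simp only [Matrix.mul_apply, star_apply, RCLike.star_def, Complex.conj_mul', one_apply_eq] at h
    exact_mod_cast h

theorem trace_spectralHom_mul_spectralHom (U V : unitaryGroup ι ℂ) (p q : ι → ℝ) :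
    (spectralHom U p * spectralHom V q).trace
      = ((∑ i, p i * ∑ j, unistochastic (U⁻¹ * V) i j * q j : ℝ) : ℂ) := by
  set W := U⁻¹ * V with hW
  have hcycle : (spectralHom U p * spectralHom V q).trace
      = (diagonal (fun i => (p i : ℂ)) *
          (W * diagonal (fun j => (q j : ℂ)) * star (W : Matrix ι ι ℂ))).trace := by
    rw [spectralHom_apply, spectralHom_apply, Matrix.mul_assoc, Matrix.mul_assoc, trace_mul_comm]
    simp [hW, Matrix.mul_assoc]
  rw [hcycle]
  simp only [trace, diag_apply, diagonal_mul]
  push_cast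
  refine Finset.sum_congr rfl fun i _ => ?_
  rw [Matrix.mul_apply]
  congr 1
  refine Finset.sum_congr rfl fun j _ => ?_
  rw [mul_diagonal, star_apply, mul_right_comm, RCLike.star_def, Complex.mul_conj']
  simp [unistochastic]

theorem dotProduct_spectralHom_mulVec (U : unitaryGroup ι ℂ) (p : ι → ℝ) (v : ι → ℂ) :
    star v ⬝ᵥ (spectralHom U p *ᵥ v)
      = ((∑ i, p i * ‖(star (U : Matrix ι ι ℂ) *ᵥ v) i‖ ^ 2 : ℝ) : ℂ) := by
  have hv : star v ᵥ* (U : Matrix ι ι ℂ) = star (star (U : Matrix ι ι ℂ) *ᵥ v) := by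
    rw [star_mulVec, star_eq_conjTranspose, conjTranspose_conjTranspose]
  rw [spectralHom_apply, ← mulVec_mulVec, ← mulVec_mulVec, dotProduct_mulVec, hv]
  simp only [dotProduct, mulVec_diagonal, Pi.star_apply]
  push_cast
  refine Finset.sum_congr rfl fun i _ => ?_
  rw [← Complex.conj_mul', RCLike.star_def]
  ring

theorem mul_unistochastic_eq_zero_of_ker_le {U V : unitaryGroup ι ℂ} {p q : ι → ℝ}
    (hker : ∀ v, spectralHom V q *ᵥ v = 0 → spectralHom U p *ᵥ v = 0) (i j : ι) (hj : q j = 0) :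
    p i * unistochastic (U⁻¹ * V) i j = 0 := by
  have hV : spectralHom V q *ᵥ (V *ᵥ Pi.single j 1) = 0 := by
    rw [spectralHom_apply, mulVec_mulVec, Matrix.mul_assoc, Unitary.coe_star_mul_self,
      Matrix.mul_one, ← mulVec_mulVec]
    simp [hj]
  have hU : diagonal (fun i => (p i : ℂ)) *ᵥ
      ((U⁻¹ * V : unitaryGroup ι ℂ) *ᵥ Pi.single j 1) = 0 := by
    have h := congrArg (star (U : Matrix ι ι ℂ) *ᵥ ·) (hker _ hV)
    simp only [spectralHom_apply, mulVec_mulVec, ← Matrix.mul_assoc, Unitary.coe_star_mul_self,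
      Matrix.one_mul, mulVec_zero] at h
    rwa [mulVec_mulVec, Submonoid.coe_mul, ← Matrix.mul_assoc]
  have h := congrFun hU i
  rw [mulVec_diagonal, mulVec_single_one] at h
  simpa [unistochastic] using h

theorem mul_sum_unistochastic_div_le {U V : unitaryGroup ι ℂ} {p q : ι → ℝ} (hp : 0 ≤ p)
    (hq : 0 ≤ q) {J : ℝ} (hJ : 0 ≤ J)
    (hle : spectralHom U p ≤ J • spectralHom V q) (i : ι) :
    p i * ∑ j, unistochastic (U⁻¹ * V) i j / q j ≤ J := by
  set W := U⁻¹ * V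
  set s := ∑ j, unistochastic W i j / q j with hs
  -- `V *ᵥ y` is `σ⁺ uᵢ` for `σ = spectralHom V q` and `uᵢ` the `i`-th column of `U`: dividing by
  -- `q j = 0` gives `0`, hence the pseudo-inverse.
  set y : ι → ℂ := fun j => star (W i j) / q j with hy
  have hquad : ∑ l, p l * ‖((W : Matrix ι ι ℂ) *ᵥ y) l‖ ^ 2 ≤ J * ∑ j, q j * ‖y j‖ ^ 2 := by
    have h := (le_iff.mp hle).dotProduct_mulVec_nonneg (V *ᵥ y)
    rw [sub_mulVec, dotProduct_sub, smul_mulVec, dotProduct_smul, dotProduct_spectralHom_mulVec,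
      dotProduct_spectralHom_mulVec, mulVec_mulVec, mulVec_mulVec, Unitary.coe_star_mul_self,
      one_mulVec] at h
    rw [Complex.real_smul, ← Complex.ofReal_mul, ← Complex.ofReal_sub, Complex.zero_le_real,
      sub_nonneg] at h
    exact h
  have hWy : ((W : Matrix ι ι ℂ) *ᵥ y) i = s := by
    simp only [mulVec, dotProduct, hs, hy]
    push_cast
    refine Finset.sum_congr rfl fun j _ => ?_
    rw [mul_div_assoc', RCLike.star_def, Complex.mul_conj']
    simp [unistochastic]
  have hqy : ∑ j, q j * ‖y j‖ ^ 2 = s := by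
    refine Finset.sum_congr rfl fun j _ => ?_
    rcases eq_or_ne (q j) 0 with hqj | hqj
    · simp [hqj]
    · simp only [hy, norm_div, norm_star, Complex.norm_real, Real.norm_eq_abs, div_pow, sq_abs,
        unistochastic, of_apply]
      field_simp
  have hsq : p i * s * s ≤ J * s := by
    have hi := Finset.single_le_sum (f := fun l => p l * ‖((W : Matrix ι ι ℂ) *ᵥ y) l‖ ^ 2)
      (fun l _ => mul_nonneg (hp l) (sq_nonneg _)) (Finset.mem_univ i)
    simp only [hWy, Complex.norm_real, Real.norm_eq_abs, sq_abs] at hi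
    calc p i * s * s = p i * s ^ 2 := by ring
      _ ≤ _ := hi.trans hquad
      _ = J * s := by rw [hqy]
  have hs0 : 0 ≤ s := Finset.sum_nonneg fun j _ => div_nonneg (sq_nonneg _) (hq j)
  rcases hs0.eq_or_lt with h0 | h0
  · rwa [← h0, mul_zero]
  · exact le_of_mul_le_mul_right hsq h0

theorem relEnt_spectralHom (U V : unitaryGroup ι ℂ) (p q : ι → ℝ) :
    relEnt (spectralHom U p) (spectralHom V q)
      = ∑ i, p i * ∑ j, unistochastic (U⁻¹ * V) i j * (Real.log (p i) - Real.log (q j)) := by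
  rw [relEnt, matLog_spectralHom, matLog_spectralHom, ← map_mul, trace_spectralHom,
    trace_spectralHom_mul_spectralHom, ← Complex.ofReal_sub, Complex.ofReal_re,
    ← Finset.sum_sub_distrib]
  refine Finset.sum_congr rfl fun i _ => ?_
  simp only [mul_sub, Finset.sum_sub_distrib, ← Finset.sum_mul, one_mul, Pi.mul_apply,
    sum_row_of_mem_doublyStochastic (unistochastic_mem_doublyStochastic _), Function.comp_apply]

theorem trace_sub_trace_le_relEnt {ρ σ : Matrix ι ι ℂ} (hρ : ρ.PosSemidef) (hσ : σ.PosSemidef)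
    (hker : ∀ v, σ *ᵥ v = 0 → ρ *ᵥ v = 0) : ρ.trace.re - σ.trace.re ≤ relEnt ρ σ := by
  obtain ⟨U, p, hp, rfl⟩ := exists_nonneg_spectralHom_eq hρ
  obtain ⟨V, q, hq, rfl⟩ := exists_nonneg_spectralHom_eq hσ
  rw [relEnt_spectralHom, trace_spectralHom, trace_spectralHom, Complex.ofReal_re,
    Complex.ofReal_re]
  exact sum_sub_sum_le_of_mem_doublyStochastic (unistochastic_mem_doublyStochastic _) hp hq
    (mul_unistochastic_eq_zero_of_ker_le hker)

theorem relEnt_le_log_mul_trace {ρ σ : Matrix ι ι ℂ} (hρ : ρ.PosSemidef) {J : ℝ}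
    (hJ : 0 < J) (hle : ρ ≤ J • σ) : relEnt ρ σ ≤ Real.log J * ρ.trace.re := by
  have hσ : 0 ≤ σ := by
    simpa [hJ.ne'] using smul_nonneg (inv_nonneg.mpr hJ.le) (hρ.nonneg.trans hle)
  have hker (v : ι → ℂ) (hv : σ *ᵥ v = 0) : ρ *ᵥ v = 0 := mulVec_eq_zero_of_le_smul hρ hle hv
  obtain ⟨U, p, hp, rfl⟩ := exists_nonneg_spectralHom_eq hρ
  obtain ⟨V, q, hq, rfl⟩ := exists_nonneg_spectralHom_eq hσ.posSemidef
  have hB := unistochastic_mem_doublyStochastic (U⁻¹ * V)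
  rw [relEnt_spectralHom, trace_spectralHom, Complex.ofReal_re, Finset.mul_sum]
  simp only [mul_comm (Real.log J)]
  refine Finset.sum_le_sum fun i _ => ?_
  rcases (hp i).eq_or_lt with hpi | hpi
  · simp [← hpi]
  · exact mul_le_mul_of_nonneg_left (sum_mul_log_sub_log_le
      (fun j => nonneg_of_mem_doublyStochastic hB) (sum_row_of_mem_doublyStochastic hB i) hq
      (fun j hj => (mul_eq_zero_iff_left hpi.ne').mp
        (mul_unistochastic_eq_zero_of_ker_le hker i j hj))
      hpi hJ (mul_sum_unistochastic_div_le hp hq hJ.le hle i)) hpi.le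

end Spectral

section Pinching

variable {κ R : Type*} [Fintype κ]

/-- The pinching map `A ↦ ∑ j, P j * A * P j`, intended for complete families `P` of mutually
orthogonal projections. -/
def pinching [NonUnitalNonAssocSemiring R] (P : κ → R) (A : R) : R := ∑ j, P j * A * P j

theorem commute_pinching [Semiring R] {P : κ → R} (hP : OrthogonalIdempotents P) (A : R) (j : κ) :
    Commute (pinching P A) (P j) := by
  classical
  have hright : pinching P A * P j = P j * A * P j := by
    simp [pinching, Finset.sum_mul, mul_assoc, hP.mul_eq]
  have hleft : P j * pinching P A = P j * A * P j := by
    simp [pinching, Finset.mul_sum, ← mul_assoc, hP.mul_eq]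
  exact hright.trans hleft.symm

theorem pinching_nonneg [NonUnitalSemiring R] [StarRing R] [PartialOrder R] [StarOrderedRing R]
    {P : κ → R} (hP : ∀ j, IsSelfAdjoint (P j)) {A : R} (hA : 0 ≤ A) : 0 ≤ pinching P A :=
  Finset.sum_nonneg fun j _ => (hP j).conjugate_nonneg hA

theorem le_card_smul_pinching [Ring R] [StarRing R] [PartialOrder R] [StarOrderedRing R]
    [Module ℝ R] [PosSMulMono ℝ R] {P : κ → R} (hP : ∀ j, IsSelfAdjoint (P j))
    (hsum : ∑ j, P j = 1) {A : R} (hA : 0 ≤ A) : A ≤ (Fintype.card κ : ℝ) • pinching P A := by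
  have hnonneg : 0 ≤ ∑ j, ∑ l, (P j - P l) * A * (P j - P l) :=
    Finset.sum_nonneg fun j _ => Finset.sum_nonneg fun l _ =>
      ((hP j).sub (hP l)).conjugate_nonneg hA
  have hexpand : ∑ j, ∑ l, (P j - P l) * A * (P j - P l)
      = (2 : ℝ) • ((Fintype.card κ : ℝ) • pinching P A - A) := by
    have hcross : ∑ j, ∑ l, P j * A * P l = A := by
      simp [← Finset.mul_sum, ← Finset.sum_mul, hsum]
    have hcross' : ∑ j, ∑ l, P l * A * P j = A := by
      simp [← Finset.mul_sum, ← Finset.sum_mul, hsum]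
    simp only [sub_mul, mul_sub, Finset.sum_sub_distrib, hcross, hcross', Finset.sum_const,
      ← Finset.smul_sum, Finset.card_univ, two_smul, Nat.cast_smul_eq_nsmul, pinching]
    abel
  have h := smul_nonneg (by norm_num : (0 : ℝ) ≤ 2⁻¹) (hexpand ▸ hnonneg)
  rwa [inv_smul_smul₀ two_ne_zero, sub_nonneg] at h

end Pinching

section RelEntPinching

variable {κ ι : Type*} [Fintype κ] [Fintype ι] [DecidableEq ι] {P : κ → Matrix ι ι ℂ}

theorem trace_pinching_mul (hP : CompleteOrthogonalIdempotents P) (A : Matrix ι ι ℂ)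
    {L : Matrix ι ι ℂ} (hL : ∀ j, Commute L (P j)) : (pinching P A * L).trace = (A * L).trace := by
  have hterm (j : κ) : (P j * A * P j * L).trace = (A * L * P j).trace := by
    calc (P j * A * P j * L).trace = (A * (P j * L) * P j).trace := by
          rw [Matrix.mul_assoc, Matrix.mul_assoc, trace_mul_comm, Matrix.mul_assoc]
      _ = (A * L * P j).trace := by
          rw [← (hL j).eq, Matrix.mul_assoc, Matrix.mul_assoc, (hP.idem j).eq, Matrix.mul_assoc]
  rw [pinching, Finset.sum_mul, trace_sum]
  simp only [hterm]
  rw [← trace_sum, ← Finset.mul_sum, hP.complete, Matrix.mul_one]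

theorem trace_pinching (hP : CompleteOrthogonalIdempotents P) (A : Matrix ι ι ℂ) :
    (pinching P A).trace = A.trace := by
  simpa using trace_pinching_mul hP A fun j => Commute.one_left (P j)

theorem relEnt_eq_relEnt_pinching_add_relEnt (hP : CompleteOrthogonalIdempotents P)
    (ρ : Matrix ι ι ℂ) {σ : Matrix ι ι ℂ} (hσ : pinching P σ = σ) :
    relEnt ρ σ = relEnt ρ (pinching P ρ) + relEnt (pinching P ρ) σ := by
  have hlog {A : Matrix ι ι ℂ} (hA : ∀ j, Commute A (P j)) :
      (pinching P ρ * matLog A).trace = (ρ * matLog A).trace :=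
    trace_pinching_mul hP ρ fun j => matLog_eq_cfc A ▸ (hA j).cfc_real Real.log
  simp only [relEnt, Complex.sub_re, hlog (commute_pinching hP.toOrthogonalIdempotents ρ),
    hlog fun j => hσ ▸ commute_pinching hP.toOrthogonalIdempotents σ j]
  ring

theorem relEnt_pinching_nonneg (hherm : ∀ j, IsSelfAdjoint (P j))
    (hP : CompleteOrthogonalIdempotents P) {ρ : Matrix ι ι ℂ} (hρ : ρ.PosSemidef) :
    0 ≤ relEnt ρ (pinching P ρ) := by
  have h := trace_sub_trace_le_relEnt hρ (pinching_nonneg hherm hρ.nonneg).posSemidef fun v =>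
    mulVec_eq_zero_of_le_smul hρ (le_card_smul_pinching hherm hP.complete hρ.nonneg)
  rwa [trace_pinching hP, sub_self] at h

theorem relEnt_pinching_le_log_card_mul_trace (hherm : ∀ j, IsSelfAdjoint (P j))
    (hsum : ∑ j, P j = 1) {ρ : Matrix ι ι ℂ} (hρ : ρ.PosSemidef) :
    relEnt ρ (pinching P ρ) ≤ Real.log (Fintype.card κ) * ρ.trace.re := by
  cases isEmpty_or_nonempty κ
  · have : Subsingleton (Matrix ι ι ℂ) := subsingleton_of_zero_eq_one (by simpa using hsum)
    simp [relEnt, Subsingleton.elim ρ 0]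
  · exact relEnt_le_log_mul_trace hρ (by positivity)
      (le_card_smul_pinching hherm hsum hρ.nonneg)

end RelEntPinching

section PowMat

variable {d : ℕ}

theorem powMat_mul (A B : Matrix (Fin d) (Fin d) ℂ) (k : ℕ) :
    powMat (A * B) k = powMat A k * powMat B k := by
  ext x y
  simp only [powMat, Matrix.mul_apply, ← Finset.prod_mul_distrib]
  exact Fintype.prod_sum fun i a => A (x i) a * B a (y i)

theorem powMat_conjTranspose (A : Matrix (Fin d) (Fin d) ℂ) (k : ℕ) :
    powMat Aᴴ k = (powMat A k)ᴴ := by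
  ext x y
  simp [powMat, conjTranspose_apply]

theorem powMat_diagonal (a : Fin d → ℂ) (k : ℕ) :
    powMat (diagonal a) k = diagonal fun x => ∏ i, a (x i) := by
  ext x y
  simp only [powMat, diagonal_apply, Finset.prod_ite_zero, Finset.mem_univ, true_imp_iff,
    funext_iff]

theorem trace_powMat (A : Matrix (Fin d) (Fin d) ℂ) (k : ℕ) :
    (powMat A k).trace = A.trace ^ k := by
  simp [trace, powMat, ← Fintype.prod_sum (fun (_ : Fin k) a => A a a)]

/-- The tensor power `A ↦ A^{⊗k}` as a homomorphism of `*`-monoids. -/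
noncomputable def powMatHom (d k : ℕ) :
    Matrix (Fin d) (Fin d) ℂ →⋆* Matrix (Fin k → Fin d) (Fin k → Fin d) ℂ where
  toFun A := powMat A k
  map_one' := by simp [← diagonal_one, powMat_diagonal]
  map_mul' A B := powMat_mul A B k
  map_star' A := powMat_conjTranspose A k

theorem powMat_spectralHom (U : unitaryGroup (Fin d) ℂ) (p : Fin d → ℝ) (k : ℕ) :
    powMat (spectralHom U p) k
      = spectralHom (Unitary.map (powMatHom d k) U) fun x => ∏ i, p (x i) := by
  rw [spectralHom_apply, spectralHom_apply, powMat_mul, powMat_mul, powMat_diagonal,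
    star_eq_conjTranspose, powMat_conjTranspose]
  push_cast
  rfl

theorem posSemidef_powMat {A : Matrix (Fin d) (Fin d) ℂ} (hA : A.PosSemidef) (k : ℕ) :
    (powMat A k).PosSemidef := by
  obtain ⟨B, rfl⟩ := CStarAlgebra.nonneg_iff_eq_star_mul_self.mp hA.nonneg
  rw [star_eq_conjTranspose, powMat_mul, powMat_conjTranspose]
  exact posSemidef_conjTranspose_mul_self _

theorem unistochastic_map_powMatHom (W : unitaryGroup (Fin d) ℂ) {k : ℕ} (x y : Fin k → Fin d) :
    unistochastic (Unitary.map (powMatHom d k) W) x y = ∏ i, unistochastic W (x i) (y i) := by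
  change ‖∏ i, W (x i) (y i)‖ ^ 2 = ∏ i, ‖W (x i) (y i)‖ ^ 2
  rw [norm_prod, Finset.prod_pow]

theorem relEnt_powMat {ρ σ : Matrix (Fin d) (Fin d) ℂ} (hρ : ρ.IsHermitian)
    (hρ1 : ρ.trace = 1) (hσ : σ.IsHermitian) (hker : ∀ v, σ *ᵥ v = 0 → ρ *ᵥ v = 0) (k : ℕ) :
    relEnt (powMat ρ k) (powMat σ k) = k * relEnt ρ σ := by
  obtain ⟨U, p, rfl⟩ := exists_spectralHom_eq hρ
  obtain ⟨V, q, rfl⟩ := exists_spectralHom_eq hσ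
  set B := unistochastic (U⁻¹ * V) with hB
  have hw1 : ∑ a : Fin d × Fin d, p a.1 * B a.1 a.2 = 1 := by
    rw [trace_spectralHom] at hρ1
    simp only [Fintype.sum_prod_type, ← Finset.mul_sum, mul_one, hB,
      sum_row_of_mem_doublyStochastic (unistochastic_mem_doublyStochastic _)]
    exact_mod_cast hρ1
  have hterm (x y : Fin k → Fin d) :
      (∏ i, p (x i)) * ((∏ i, B (x i) (y i)) *
          (Real.log (∏ i, p (x i)) - Real.log (∏ i, q (y i))))
        = (∏ i, p (x i) * B (x i) (y i)) * ∑ i, (Real.log (p (x i)) - Real.log (q (y i))) := by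
    rw [← mul_assoc, ← Finset.prod_mul_distrib]
    exact prod_mul_log_prod_sub_log_prod (fun _ hi => by rw [hi, zero_mul])
      fun i => mul_unistochastic_eq_zero_of_ker_le hker (x i) (y i)
  rw [powMat_spectralHom, powMat_spectralHom, relEnt_spectralHom, relEnt_spectralHom, ← map_inv,
    ← map_mul]
  simp only [unistochastic_map_powMatHom, ← hB, Finset.mul_sum _ _ (∏ _, p _), hterm]
  calc _ = ∑ z : Fin k → Fin d × Fin d, (∏ i, p (z i).1 * B (z i).1 (z i).2) *
          ∑ i, (Real.log (p (z i).1) - Real.log (q (z i).2)) := by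
        rw [← (Equiv.arrowProdEquivProdArrow (Fin k) (fun _ => Fin d)
          (fun _ => Fin d)).symm.sum_comp, Fintype.sum_prod_type]
        rfl
    _ = _ := by
        rw [sum_prod_mul_sum_of_sum_eq_one hw1 fun a => Real.log (p a.1) - Real.log (q a.2),
          Fintype.card_fin, Fintype.sum_prod_type]
        simp only [Finset.mul_sum, mul_assoc]

end PowMat

theorem tendsto_inv_mul_log_of_le_rpow {J : ℕ → ℝ} {c : ℝ} (hJ1 : ∀ k, 1 ≤ J k)
    (hJle : ∀ k : ℕ, J k ≤ ((k : ℝ) + 1) ^ c) :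
    Tendsto (fun k : ℕ => (k : ℝ)⁻¹ * Real.log (J k)) atTop (𝓝 0) := by
  have hlog : Tendsto (fun k : ℕ => c * (Real.log ((k : ℝ) + 1) / k)) atTop (𝓝 0) := by
    have h := (Real.tendsto_pow_log_div_mul_add_atTop 1 (-1) 1 one_ne_zero).comp
      (tendsto_atTop_add_const_right atTop (1 : ℝ) tendsto_natCast_atTop_atTop)
    simpa [Function.comp_def] using h.const_mul c
  refine squeeze_zero (fun k => mul_nonneg (by positivity) (Real.log_nonneg (hJ1 k))) (fun k => ?_)
    hlog
  calc (k : ℝ)⁻¹ * Real.log (J k) ≤ (k : ℝ)⁻¹ * Real.log (((k : ℝ) + 1) ^ c) := by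
        gcongr
        · exact zero_lt_one.trans_le (hJ1 k)
        · exact hJle k
    _ = c * (Real.log ((k : ℝ) + 1) / k) := by
        rw [Real.log_rpow (by positivity)]
        ring

theorem limsup_pinched_relEnt_eq_general {d : ℕ} {ρ τ : Matrix (Fin d) (Fin d) ℂ}
    (hρ : ρ.PosSemidef) (hρ1 : ρ.trace = 1) (hτ : τ.PosSemidef)
    (hsupp : ∀ v, τ *ᵥ v = 0 → ρ *ᵥ v = 0) {κ : ℕ → Type*} [∀ k, Fintype (κ k)]
    (hκ : Tendsto (fun k : ℕ => (k : ℝ)⁻¹ * Real.log (Fintype.card (κ k))) atTop (𝓝 0))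
    {P : ∀ k, κ k → Matrix (Fin k → Fin d) (Fin k → Fin d) ℂ}
    (hherm : ∀ k j, IsSelfAdjoint (P k j)) (hP : ∀ k, CompleteOrthogonalIdempotents (P k))
    (hfix : ∀ k, pinching (P k) (powMat τ k) = powMat τ k) :
    Tendsto (fun k : ℕ => (k : ℝ)⁻¹ * relEnt (pinching (P k) (powMat ρ k)) (powMat τ k)) atTop
      (𝓝 (relEnt ρ τ)) := by
  have hdefect : Tendsto (fun k : ℕ => (k : ℝ)⁻¹ *
      relEnt (powMat ρ k) (pinching (P k) (powMat ρ k))) atTop (𝓝 0) := by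
    refine squeeze_zero (fun k => mul_nonneg (by positivity)
      (relEnt_pinching_nonneg (hherm k) (hP k) (posSemidef_powMat hρ k))) (fun k => ?_) hκ
    have h := relEnt_pinching_le_log_card_mul_trace (hherm k) (hP k).complete
      (posSemidef_powMat hρ k)
    rw [trace_powMat, hρ1, one_pow, Complex.one_re, mul_one] at h
    gcongr
  have hlim := hdefect.const_sub (relEnt ρ τ)
  rw [sub_zero] at hlim
  refine hlim.congr' ?_
  filter_upwards [eventually_ne_atTop 0] with k hk
  have hk' : (k : ℝ) ≠ 0 := Nat.cast_ne_zero.mpr hk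
  have hsplit := relEnt_eq_relEnt_pinching_add_relEnt (hP k) (powMat ρ k) (hfix k)
  rw [relEnt_powMat hρ.isHermitian hρ1 hτ.isHermitian hsupp] at hsplit
  rw [sub_eq_iff_eq_add', ← mul_add, ← hsplit, inv_mul_cancel_left₀ hk']

/-- If `τ` is a full-rank density matrix and, for each `k`, `Pk` is a pinching
channel on the `k`-fold tensor power fixing `τ^{⊗k}` and using at most `(k+1)^c` projectors,
then `limsup_k (1/k) D(Pk(ρ^{⊗k}) ‖ τ^{⊗k}) = D(ρ‖τ)` for every density matrix `ρ` with
`supp ρ ⊆ supp τ`. -/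
theorem limsup_pinched_relEnt_eq
    {d : ℕ} (ρ τ : Matrix (Fin d) (Fin d) ℂ)
    (hρ : ρ.PosSemidef) (hρ1 : ρ.trace = 1)
    (hτ : τ.PosDef) (hτ1 : τ.trace = 1)
    (hsupp : ∀ v, τ.mulVec v = 0 → ρ.mulVec v = 0)
    (c : ℝ) (J : ℕ → ℕ) (hJpos : ∀ k, 0 < J k)
    (hJle : ∀ k, (J k : ℝ) ≤ ((k : ℝ) + 1) ^ c)
    (P : ∀ k, Fin (J k) → Matrix (Fin k → Fin d) (Fin k → Fin d) ℂ)
    (hproj : ∀ k j, (P k j)ᴴ = P k j ∧ P k j * P k j = P k j)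
    (horth : ∀ k j j', j ≠ j' → P k j * P k j' = 0)
    (hsum : ∀ k, ∑ j, P k j = 1)
    (hfix : ∀ k, ∑ j, P k j * powMat τ k * P k j = powMat τ k) :
    Filter.atTop.limsup
      (fun k : ℕ => ((k : ℝ))⁻¹ * relEnt (∑ j, P k j * powMat ρ k * P k j) (powMat τ k))
      = relEnt ρ τ := by
  have hκ := tendsto_inv_mul_log_of_le_rpow (fun k => Nat.one_le_cast.mpr (hJpos k)) hJle
  exact (limsup_pinched_relEnt_eq_general hρ hρ1 hτ.posSemidef hsupp
    (by simpa only [Fintype.card_fin] using hκ) (fun k j => (hproj k j).1)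
    (fun k => ⟨⟨fun j => (hproj k j).2, horth k⟩, hsum k⟩) hfix).limsup_eq
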